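/- arXiv:2102.00135 — 4 statements merged into one kernel-verified Lean document; each statement's English description precedes it below -/
import Mathlib

section
/- (Performance difference lemma.) For any two policies π and π' and any state s ∈ S, V^{π'}(s) − V^π(s) = (1/(1−γ)) Σ_{s'∈S} d_s^{π'}(s') [ ⟨A^π(s',·), π'(·|s')⟩ + h^{π'}(s') − h^π(s') ], where A^π(s',a) = Q^π(s',a) − V^π(s') is the advantage function. -/
open Finset

noncomputable section

namespace RL

/-- The probability simplex on a finite set `A`. -/
def simplex (A : Type*) [Fintype A] : Set (A → ℝ) :=
  {p | (∀ a, 0 ≤ p a) ∧ ∑ a, p a = 1}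

/-- A policy assigns to each state a distribution over actions. -/
def IsPolicy {S A : Type*} [Fintype A] (π : S → A → ℝ) : Prop :=
  ∀ s, π s ∈ simplex A

/-- `KL q p` is the Bregman (KL) divergence `D_q^p = ∑_a p a * log (p a / q a)`. -/
def KL {A : Type*} [Fintype A] (q p : A → ℝ) : ℝ :=
  ∑ a, p a * Real.log (p a / q a)

/-- The state transition matrix `P^π` induced by policy `π`. -/
def Pmat {S A : Type*} [Fintype A] (P : S → A → S → ℝ) (π : S → A → ℝ) :
    Matrix S S ℝ :=
  Matrix.of fun s s' => ∑ a, π s a * P s a s'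

/-- `V` satisfies the Bellman equation for policy `π`, cost `c`, regularizer `h`,
and discount factor `γ`. -/
def IsValue {S A : Type*} [Fintype S] [Fintype A] (P : S → A → S → ℝ)
    (c : S → A → ℝ) (h : S → (A → ℝ) → ℝ) (γ : ℝ) (π : S → A → ℝ)
    (V : S → ℝ) : Prop :=
  ∀ s, V s = (∑ a, π s a * c s a) + h s (π s)
    + γ * ∑ s', (∑ a, π s a * P s a s') * V s'

/-- The action-value function `Q^π` determined by a state-value function `V`. -/
def Qfun {S A : Type*} [Fintype S] (P : S → A → S → ℝ) (c : S → A → ℝ)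
    (h : S → (A → ℝ) → ℝ) (γ : ℝ) (π : S → A → ℝ) (V : S → ℝ) :
    S → A → ℝ :=
  fun s a => c s a + h s (π s) + γ * ∑ s', P s a s' * V s'

/-- The discounted state-visitation distribution `d_s^π(s')`. -/
def dvisit {S A : Type*} [Fintype S] [Fintype A] [DecidableEq S]
    (P : S → A → S → ℝ) (γ : ℝ) (π : S → A → ℝ) (s s' : S) : ℝ :=
  (1 - γ) * ∑' t : ℕ, γ ^ t * ((Pmat P π) ^ t) s s'

/-- `next` minimizes `p ↦ η * (⟨G, p⟩ + hreg p) + KL base p` over the simplex. -/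
def IsProxStep {A : Type*} [Fintype A] (G : A → ℝ) (hreg : (A → ℝ) → ℝ)
    (η : ℝ) (base next : A → ℝ) : Prop :=
  next ∈ simplex A ∧ ∀ p ∈ simplex A,
    η * ((∑ a, G a * next a) + hreg next) + KL base next ≤
      η * ((∑ a, G a * p a) + hreg p) + KL base p

/-- `h` is convex with modulus `μ` relative to KL, with subgradients `h'`. -/
def ConvexReg {S A : Type*} [Fintype A] (h : S → (A → ℝ) → ℝ)
    (h' : S → (A → ℝ) → A → ℝ) (μ : ℝ) : Prop :=
  ∀ s : S, ∀ p ∈ simplex A, ∀ q ∈ simplex A,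
    μ * KL q p ≤ h s p - (h s q + ∑ a, h' s q a * (p a - q a))

/-!
Write `T V = c^{π'} + h^{π'} + γ P^{π'} V` for the Bellman operator of `π'`. For every `V`, the
bracket in the performance difference formula is the Bellman residual `T V - V`. The value
function of `π'` is a fixed point of `T`, and `T` is affine with linear part `γ P^{π'}`, so the
residual equals `(1 - γ P^{π'}) (V^{π'} - V)`. The powers of the row stochastic matrix `P^{π'}`
have entries in `[0, 1]`, so the Neumann series of `γ P^{π'}` converges; it inverts
`1 - γ P^{π'}`, and it is `d^{π'} / (1 - γ)`.
-/

section NeumannSeries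

open scoped Matrix

theorem tsum_matrix_apply {ι m n R : Type*} [AddCommMonoid R] [TopologicalSpace R] [T2Space R]
    {f : ι → Matrix m n R} (hf : Summable f) (i : m) (j : n) :
    (∑' t, f t) i j = ∑' t, f t i j := by
  have summable_row : Summable fun t => f t i := Pi.summable.1 hf i
  exact (congrFun (tsum_apply hf) j).trans (tsum_apply summable_row)

variable {n : Type*} [Fintype n] [DecidableEq n]

theorem tsum_pow_mulVec_sub_mulVec {R : Type*} [Ring R] [TopologicalSpace R]
    [IsTopologicalRing R] [T2Space R] {M : Matrix n n R} (hM : Summable fun t : ℕ => M ^ t)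
    (v : n → R) : (∑' t : ℕ, M ^ t) *ᵥ (v - M *ᵥ v) = v :=
  calc (∑' t : ℕ, M ^ t) *ᵥ (v - M *ᵥ v)
      = ((∑' t : ℕ, M ^ t) * (1 - M)) *ᵥ v := by
        rw [← Matrix.mulVec_mulVec, Matrix.sub_mulVec, Matrix.one_mulVec]
    _ = v := by rw [hM.tsum_pow_mul_one_sub, Matrix.one_mulVec]

variable {M : Matrix n n ℝ} {γ : ℝ}

theorem summable_smul_pow_of_mem_rowStochastic (hM : M ∈ Matrix.rowStochastic ℝ n)
    (hγ : |γ| < 1) : Summable fun t : ℕ => (γ • M) ^ t := by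
  refine Pi.summable.2 fun i => Pi.summable.2 fun j => ?_
  refine Summable.of_norm_bounded (summable_geometric_of_lt_one (abs_nonneg γ) hγ) fun t => ?_
  have hMt : M ^ t ∈ Matrix.rowStochastic ℝ n := pow_mem hM t
  calc ‖((γ • M) ^ t) i j‖ = |γ| ^ t * (M ^ t) i j := by
        rw [smul_pow, Matrix.smul_apply, norm_smul, norm_pow, Real.norm_eq_abs,
          Real.norm_of_nonneg (Matrix.nonneg_of_mem_rowStochastic hMt)]
    _ ≤ |γ| ^ t := mul_le_of_le_one_right (by positivity) (Matrix.le_one_of_mem_rowStochastic hMt)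

theorem sum_tsum_pow_mul_sub_mulVec_of_mem_rowStochastic (hM : M ∈ Matrix.rowStochastic ℝ n)
    (hγ : |γ| < 1) (v : n → ℝ) (i : n) :
    ∑ j, (∑' t : ℕ, γ ^ t * (M ^ t) i j) * (v j - γ * (M *ᵥ v) j) = v i := by
  have summable_pow := summable_smul_pow_of_mem_rowStochastic hM hγ
  have entry (j : n) : ∑' t : ℕ, γ ^ t * (M ^ t) i j = (∑' t : ℕ, (γ • M) ^ t) i j := by
    rw [tsum_matrix_apply summable_pow]
    simp only [smul_pow, Matrix.smul_apply, smul_eq_mul]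
  have residual (j : n) : v j - γ * (M *ᵥ v) j = (v - (γ • M) *ᵥ v) j := by
    rw [Matrix.smul_mulVec, Pi.sub_apply, Pi.smul_apply, smul_eq_mul]
  simp only [entry, residual]
  exact congrFun (tsum_pow_mulVec_sub_mulVec summable_pow v) i

end NeumannSeries

section Bellman

open scoped Matrix

variable {S A : Type*} [Fintype S] [Fintype A] {P : S → A → S → ℝ} {c : S → A → ℝ}
  {h : S → (A → ℝ) → ℝ} {γ : ℝ} {π : S → A → ℝ}

theorem Pmat_mem_rowStochastic [DecidableEq S] (hP0 : ∀ s a s', 0 ≤ P s a s')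
    (hP1 : ∀ s a, ∑ s', P s a s' = 1) (hπ : IsPolicy π) :
    Pmat P π ∈ Matrix.rowStochastic ℝ S := by
  refine Matrix.mem_rowStochastic_iff_sum.2 ⟨fun s s' => ?_, fun s => ?_⟩
  · exact Finset.sum_nonneg fun a _ => mul_nonneg ((hπ s).1 a) (hP0 s a s')
  · calc ∑ s', ∑ a, π s a * P s a s' = ∑ a, π s a * ∑ s', P s a s' := by
          simp only [Finset.mul_sum]
          exact Finset.sum_comm
      _ = 1 := by simp only [hP1, mul_one, (hπ s).2]

theorem sum_dvisit_mul_sub_mulVec [DecidableEq S] (hP0 : ∀ s a s', 0 ≤ P s a s')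
    (hP1 : ∀ s a, ∑ s', P s a s' = 1) (hπ : IsPolicy π) (hγ : |γ| < 1) (v : S → ℝ) (s : S) :
    ∑ s', dvisit P γ π s s' * (v s' - γ * (Pmat P π *ᵥ v) s') = (1 - γ) * v s := by
  simp only [dvisit, mul_assoc (1 - γ), ← Finset.mul_sum]
  rw [sum_tsum_pow_mul_sub_mulVec_of_mem_rowStochastic
    (Pmat_mem_rowStochastic hP0 hP1 hπ) hγ]

/-- The regularized Bellman operator `V ↦ c^π + h^π + γ P^π V` of the policy `π`, whose fixed
points are the functions satisfying `IsValue`. -/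
def bellmanOp (P : S → A → S → ℝ) (c : S → A → ℝ) (h : S → (A → ℝ) → ℝ) (γ : ℝ)
    (π : S → A → ℝ) (V : S → ℝ) (s : S) : ℝ :=
  ∑ a, π s a * c s a + h s (π s) + γ * (Pmat P π *ᵥ V) s

theorem IsValue.bellmanOp_eq {V : S → ℝ} (hV : IsValue P c h γ π V) (s : S) :
    bellmanOp P c h γ π V s = V s :=
  (hV s).symm

theorem IsValue.bellmanOp_sub_self {V : S → ℝ} (hV : IsValue P c h γ π V) (W : S → ℝ) (s : S) :
    bellmanOp P c h γ π W s - W s = (V - W) s - γ * (Pmat P π *ᵥ (V - W)) s := by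
  rw [Matrix.mulVec_sub, Pi.sub_apply, Pi.sub_apply, ← hV.bellmanOp_eq s]
  simp only [bellmanOp]
  ring

theorem sum_mul_sum_eq_Pmat_mulVec (P : S → A → S → ℝ) (π : S → A → ℝ) (V : S → ℝ) (s : S) :
    ∑ a, π s a * ∑ s', P s a s' * V s' = (Pmat P π *ᵥ V) s := by
  simp only [Pmat, Matrix.mulVec, dotProduct, Matrix.of_apply, Finset.mul_sum, Finset.sum_mul,
    mul_assoc]
  exact Finset.sum_comm

theorem sum_advantage_mul_add_eq_bellmanOp_sub (P : S → A → S → ℝ) (c : S → A → ℝ)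
    (h : S → (A → ℝ) → ℝ) (γ : ℝ) (π : S → A → ℝ) {π' : S → A → ℝ} (V : S → ℝ) {s : S}
    (hπ' : ∑ a, π' s a = 1) :
    ∑ a, (Qfun P c h γ π V s a - V s) * π' s a + (h s (π' s) - h s (π s)) =
      bellmanOp P c h γ π' V s - V s := by
  have expand : ∑ a, (Qfun P c h γ π V s a - V s) * π' s a =
      ∑ a, π' s a * c s a + (h s (π s) - V s) * ∑ a, π' s a +
        γ * ∑ a, π' s a * ∑ s', P s a s' * V s' := by
    rw [Finset.mul_sum, Finset.mul_sum, ← Finset.sum_add_distrib, ← Finset.sum_add_distrib]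
    exact Finset.sum_congr rfl fun a _ => by rw [Qfun]; ring
  rw [expand, hπ', sum_mul_sum_eq_Pmat_mulVec, bellmanOp]
  ring

theorem performance_difference_general [DecidableEq S] (hP0 : ∀ s a s', 0 ≤ P s a s')
    (hP1 : ∀ s a, ∑ s', P s a s' = 1) (hγ : |γ| < 1) (π : S → A → ℝ) {π' : S → A → ℝ}
    (hπ' : IsPolicy π') (V : S → ℝ) {Vπ' : S → ℝ} (hVπ' : IsValue P c h γ π' Vπ') (s : S) :
    Vπ' s - V s =
      (1 / (1 - γ)) * ∑ s', dvisit P γ π' s s' *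
        ((∑ a, (Qfun P c h γ π V s' a - V s') * π' s' a)
          + (h s' (π' s') - h s' (π s'))) := by
  have one_sub_ne_zero : 1 - γ ≠ 0 := (sub_pos.2 (lt_of_abs_lt hγ)).ne'
  simp only [sum_advantage_mul_add_eq_bellmanOp_sub P c h γ π V (hπ' _).2,
    hVπ'.bellmanOp_sub_self V]
  rw [sum_dvisit_mul_sub_mulVec hP0 hP1 hπ' hγ, one_div, inv_mul_cancel_left₀ one_sub_ne_zero,
    Pi.sub_apply]

end Bellman

/-- performance difference lemma: for any two policies `π, π'`
and any state `s`,
`V^{π'}(s) - V^π(s) = (1/(1-γ)) ∑_{s'} d_s^{π'}(s') [⟨A^π(s',·), π'(·|s')⟩ + h^{π'}(s') - h^π(s')]`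
where `A^π(s',a) = Q^π(s',a) - V^π(s')`. -/
theorem performance_difference {S A : Type*} [Fintype S] [Fintype A]
    [Nonempty S] [Nonempty A] [DecidableEq S]
    (P : S → A → S → ℝ) (hP0 : ∀ s a s', 0 ≤ P s a s')
    (hP1 : ∀ s a, ∑ s', P s a s' = 1)
    (c : S → A → ℝ) (γ : ℝ) (hγ0 : 0 < γ) (hγ1 : γ < 1)
    (h : S → (A → ℝ) → ℝ)
    (π π' : S → A → ℝ) (hπ : IsPolicy π) (hπ' : IsPolicy π')
    (Vπ Vπ' : S → ℝ)
    (hVπ : IsValue P c h γ π Vπ) (hVπ' : IsValue P c h γ π' Vπ')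
    (s : S) :
    Vπ' s - Vπ s =
      (1 / (1 - γ)) * ∑ s', dvisit P γ π' s s' *
        ((∑ a, (Qfun P c h γ π Vπ s' a - Vπ s') * π' s' a)
          + (h s' (π' s') - h s' (π s'))) := by
  exact performance_difference_general hP0 hP1 (abs_lt.2 ⟨by linarith, hγ1⟩) π hπ' Vπ hVπ' s

end RL
end
end

section
/- (Generalized monotonicity.) Let π* be an optimal policy and ν* a stationary distribution of P^{π*}. Then for every policy π, Σ_{s} ν*(s) [ ⟨Q^π(s,·), π(·|s) − π*(·|s)⟩ + h^π(s) − h^{π*}(s) ] = (1−γ) Σ_{s} ν*(s) (V^π(s) − V^{π*}(s)). In particular, since V^π(s) ≥ V^{π*}(s) for all s, the left-hand side is nonnegative. -/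
open Finset

noncomputable section

namespace RL

/-! With `f = V^π - V^π'`, the Bellman equations of `π` and `π'` turn the bracket
`⟨Q^π(s,·), π(·|s) - π'(·|s)⟩ + h^π(s) - h^π'(s)` into `f(s) - γ (P^π' f)(s)`, and averaging
against a `P^π'`-invariant weight replaces `P^π' f` by `f`. -/

section

open Matrix

variable {S A : Type*} [Fintype S] [Fintype A] {P : S → A → S → ℝ} {c : S → A → ℝ}
  {h : S → (A → ℝ) → ℝ} {γ : ℝ} {π π' : S → A → ℝ} {V V' ν : S → ℝ}

theorem Pmat_mulVec_apply (s : S) :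
    (Pmat P π *ᵥ V) s = ∑ a, π s a * ∑ s', P s a s' * V s' := by
  simp only [Pmat, mulVec, dotProduct, of_apply, sum_mul, mul_sum, mul_assoc]
  exact sum_comm

theorem sum_Qfun_mul {s : S} (hπ' : ∑ a, π' s a = 1) :
    ∑ a, Qfun P c h γ π V s a * π' s a
      = ∑ a, π' s a * c s a + h s (π s) + γ * (Pmat P π' *ᵥ V) s := by
  simp only [Qfun, mul_comm _ (π' s _), mul_add, sum_add_distrib, ← sum_mul, hπ', one_mul,
    mul_left_comm _ γ, ← mul_sum, Pmat_mulVec_apply]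

theorem IsValue.sum_Qfun_mul_self (hV : IsValue P c h γ π V) {s : S} (hπ : ∑ a, π s a = 1) :
    ∑ a, Qfun P c h γ π V s a * π s a = V s :=
  (sum_Qfun_mul hπ).trans (hV s).symm

theorem IsValue.sum_Qfun_mul_sub_add (hV : IsValue P c h γ π V) (hV' : IsValue P c h γ π' V')
    {s : S} (hπ : ∑ a, π s a = 1) (hπ' : ∑ a, π' s a = 1) :
    ∑ a, Qfun P c h γ π V s a * (π s a - π' s a) + (h s (π s) - h s (π' s))
      = (V - V') s - γ * (Pmat P π' *ᵥ (V - V')) s := by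
  have bellman' : V' s = ∑ a, π' s a * c s a + h s (π' s) + γ * (Pmat P π' *ᵥ V') s := hV' s
  simp only [mul_sub, sum_sub_distrib, hV.sum_Qfun_mul_self hπ, sum_Qfun_mul hπ', mulVec_sub,
    Pi.sub_apply]
  linear_combination bellman'

theorem dotProduct_sub_smul_mulVec_of_vecMul_eq {R : Type*} [CommRing R] {M : Matrix S S R}
    {ν : S → R} (hν : ν ᵥ* M = ν) (γ : R) (f : S → R) :
    ν ⬝ᵥ (f - γ • M *ᵥ f) = (1 - γ) * ν ⬝ᵥ f := by
  rw [dotProduct_sub, dotProduct_smul, dotProduct_mulVec, hν, smul_eq_mul, sub_mul, one_mul]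

theorem generalized_monotonicity_general (hπ : IsPolicy π) (hπ' : IsPolicy π')
    (hV : IsValue P c h γ π V) (hV' : IsValue P c h γ π' V') (hν : ν ᵥ* Pmat P π' = ν) :
    (∑ s, ν s * (∑ a, Qfun P c h γ π V s a * (π s a - π' s a) + (h s (π s) - h s (π' s)))
      = (1 - γ) * ∑ s, ν s * (V s - V' s))
    ∧ (γ ≤ 1 → 0 ≤ ν → V' ≤ V → 0 ≤ ∑ s, ν s *
        (∑ a, Qfun P c h γ π V s a * (π s a - π' s a) + (h s (π s) - h s (π' s)))) := by
  simp only [hV.sum_Qfun_mul_sub_add hV' (hπ _).2 (hπ' _).2]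
  have identity := dotProduct_sub_smul_mulVec_of_vecMul_eq hν γ (V - V')
  refine ⟨identity, fun hγ hν0 hle => identity.ge.trans' ?_⟩
  exact mul_nonneg (sub_nonneg.2 hγ) (dotProduct_nonneg_of_nonneg hν0 (sub_nonneg.2 hle))

end

/-- generalized monotonicity: for an optimal policy `π*` with
stationary distribution `ν*`, and any policy `π`,
`∑_s ν*(s) [⟨Q^π(s,·), π(·|s) - π*(·|s)⟩ + h^π(s) - h^{π*}(s)]
  = (1-γ) ∑_s ν*(s) (V^π(s) - V^{π*}(s)) ≥ 0`. -/
theorem generalized_monotonicity {S A : Type*} [Fintype S] [Fintype A]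
    [Nonempty S] [Nonempty A]
    (P : S → A → S → ℝ) (hP0 : ∀ s a s', 0 ≤ P s a s')
    (hP1 : ∀ s a, ∑ s', P s a s' = 1)
    (c : S → A → ℝ) (γ : ℝ) (hγ0 : 0 < γ) (hγ1 : γ < 1)
    (h : S → (A → ℝ) → ℝ)
    (V : (S → A → ℝ) → S → ℝ)
    (hV : ∀ w : S → A → ℝ, IsPolicy w → IsValue P c h γ w (V w))
    (πstar : S → A → ℝ) (hπstar : IsPolicy πstar)
    (hopt : ∀ w : S → A → ℝ, IsPolicy w → ∀ s, V πstar s ≤ V w s)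
    (ν : S → ℝ) (hν0 : ∀ s, 0 ≤ ν s) (hν1 : ∑ s, ν s = 1)
    (hstat : ∀ s', ∑ s, ν s * (∑ a, πstar s a * P s a s') = ν s')
    (π : S → A → ℝ) (hπ : IsPolicy π) :
    (∑ s, ν s * ((∑ a, Qfun P c h γ π (V π) s a * (π s a - πstar s a))
        + (h s (π s) - h s (πstar s)))
      = (1 - γ) * ∑ s, ν s * (V π s - V πstar s))
    ∧ 0 ≤ ∑ s, ν s * ((∑ a, Qfun P c h γ π (V π) s a * (π s a - πstar s a))
        + (h s (π s) - h s (πstar s))) := by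
  have general := generalized_monotonicity_general hπ hπstar (hV π hπ) (hV πstar hπstar)
    (funext hstat)
  exact ⟨general.1, general.2 hγ1.le hν0 (hopt π hπ)⟩

end RL
end
end

section
/- (Sublinear convergence of PMD for general convex regularizers.) Suppose h is convex (modulus μ = 0) relative to KL, π_0 is the uniform policy, and the PMD iterates use constant stepsize η_k = η > 0: π_{k+1}(·|s) = argmin_{p∈Δ_A}{ η[⟨Q^{π_k}(s,·), p⟩ + h^p(s)] + D_{π_k}^p(s) } for all s. Then for every k ≥ 0: f(π_{k+1}) − f(π*) ≤ ( ηγ[f(π_0) − f(π*)] + log|A| ) / ( η(1−γ)(k+1) ). -/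
open Finset

noncomputable section

namespace RL

/-!
One step of policy mirror descent minimizes a convex function plus `KL (π k s)` over the simplex.
The logarithm keeps the minimizer off the boundary, so the three-point inequality
`φ n + KL b n + KL n p ≤ φ p + KL b p` is available at every step. In terms of the Bellman operator
`T w` of a policy `w` it has two consequences: `T (π (k + 1)) (V (π k)) ≤ V (π k)`, hence the values
decrease, and, comparing with `π*` and averaging over its stationary distribution, the gap
`δ k = f (π k) - f π*` and the averaged divergence `D k` to `π*` satisfy
`η (δ (k + 1) - γ δ k) + D (k + 1) ≤ D k`. Telescoping with `δ` decreasing gives the rate `1 / k`.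
-/

section Simplex

variable {A : Type*} [Fintype A]

lemma convex_simplex : Convex ℝ (simplex A) := convex_stdSimplex ℝ A

lemma sum_mul_le_of_mem_simplex {p x : A → ℝ} (hp : p ∈ simplex A) {B : ℝ} (hx : ∀ a, x a ≤ B) :
    ∑ a, p a * x a ≤ B :=
  calc ∑ a, p a * x a ≤ ∑ a, p a * B :=
        sum_le_sum fun a _ => mul_le_mul_of_nonneg_left (hx a) (hp.1 a)
    _ = B := by rw [← sum_mul, hp.2, one_mul]

lemma convexOn_of_forall_exists_subgradient {E : Type*} [AddCommGroup E] [Module ℝ E] {s : Set E}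
    {f : E → ℝ} (hs : Convex ℝ s)
    (hf : ∀ x ∈ s, ∃ g : E →ₗ[ℝ] ℝ, ∀ y ∈ s, f x + g (y - x) ≤ f y) : ConvexOn ℝ s f := by
  refine ⟨hs, fun x hx y hy a b ha hb hab => ?_⟩
  obtain ⟨g, hg⟩ := hf _ (hs hx hy ha hb hab)
  have hgx := mul_le_mul_of_nonneg_left (hg x hx) ha
  have hgy := mul_le_mul_of_nonneg_left (hg y hy) hb
  simp only [map_sub, map_add, map_smul, smul_eq_mul] at hgx hgy ⊢
  obtain rfl : b = 1 - a := by linarith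
  linarith

lemma ConvexReg.convexOn {S : Type*} {h : S → (A → ℝ) → ℝ} {h' : S → (A → ℝ) → A → ℝ}
    (hconv : ConvexReg h h' 0) (s : S) : ConvexOn ℝ (simplex A) (h s) := by
  refine convexOn_of_forall_exists_subgradient convex_simplex fun q hq =>
    ⟨dotProductBilin ℝ ℝ (h' s q), fun p hp => ?_⟩
  have hsub := hconv s p hp q hq
  rw [zero_mul, sub_nonneg] at hsub
  exact hsub

end Simplex

section KL

variable {A : Type*} [Fintype A] {b n p q : A → ℝ}

lemma KL_self (hq : ∀ a, 0 < q a) : KL q q = 0 := by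
  simp [KL, fun a => div_self (hq a).ne']

lemma KL_nonneg (hq : q ∈ simplex A) (hqpos : ∀ a, 0 < q a) (hp : p ∈ simplex A) :
    0 ≤ KL q p := by
  have hkl : KL q p = ∑ a, q a * InformationTheory.klFun (p a / q a) := by
    have hterm (a : A) : q a * InformationTheory.klFun (p a / q a) =
        p a * Real.log (p a / q a) + q a - p a := by
      have := (hqpos a).ne'
      rw [InformationTheory.klFun_apply]
      field_simp
    simp only [hterm, sum_sub_distrib, sum_add_distrib, hp.2, hq.2, add_sub_cancel_right, KL]
  rw [hkl]
  exact sum_nonneg fun a _ => mul_nonneg (hqpos a).le <|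
    InformationTheory.klFun_nonneg (div_nonneg (hp.1 a) (hqpos a).le)

lemma KL_uniform_le_log_card (hp : p ∈ simplex A) (hq : ∀ a, q a = 1 / (Fintype.card A : ℝ)) :
    KL q p ≤ Real.log (Fintype.card A) := by
  refine sum_mul_le_of_mem_simplex hp fun a => ?_
  rcases (hp.1 a).eq_or_lt with hpa | hpa
  · simpa [← hpa] using Real.log_natCast_nonneg _
  have hp_le_one : p a ≤ 1 := hp.2 ▸ single_le_sum (fun i _ => hp.1 i) (mem_univ a)
  have : Nonempty A := ⟨a⟩
  rw [hq a, div_div_eq_mul_div, div_one]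
  gcongr
  exact mul_le_of_le_one_left (Nat.cast_nonneg _) hp_le_one

lemma KL_eq_KL_add_KL_add_sum (hb : ∀ a, 0 < b a) (hn : ∀ a, 0 < n a) (p : A → ℝ) :
    KL b p = KL b n + KL n p + ∑ a, (p a - n a) * Real.log (n a / b a) := by
  simp only [KL, ← sum_add_distrib]
  refine sum_congr rfl fun a _ => ?_
  by_cases hpa : p a = 0
  · simp [hpa]
  · rw [Real.log_div hpa (hb a).ne', Real.log_div hpa (hn a).ne',
      Real.log_div (hn a).ne' (hb a).ne']
    ring

lemma KL_le_sum_sq_div (hq : q ∈ simplex A) (hqpos : ∀ a, 0 < q a) (hp : p ∈ simplex A) :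
    KL q p ≤ ∑ a, (p a - q a) ^ 2 / q a := by
  have hterm (a : A) :
      p a * Real.log (p a / q a) ≤ (p a - q a) ^ 2 / q a + (p a - q a) := by
    have hqa := (hqpos a).ne'
    rcases (hp.1 a).eq_or_lt with hpa | hpa
    · simp only [← hpa]
      field_simp
      simp
    calc p a * Real.log (p a / q a) ≤ p a * (p a / q a - 1) := by
          gcongr
          exact Real.log_le_sub_one_of_pos (div_pos hpa (hqpos a))
      _ = (p a - q a) ^ 2 / q a + (p a - q a) := by field_simp; ring
  calc KL q p ≤ ∑ a, ((p a - q a) ^ 2 / q a + (p a - q a)) := sum_le_sum fun a _ => hterm a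
    _ = ∑ a, (p a - q a) ^ 2 / q a := by
      rw [sum_add_distrib, sum_sub_distrib, hp.2, hq.2, sub_self, add_zero]

lemma KL_convexCombo_le_of_apply_eq_zero (hb : ∀ a, 0 < b a) (hn : ∀ a, 0 ≤ n a) {a₀ : A}
    (hna₀ : n a₀ = 0) {t : ℝ} (ht0 : 0 < t) (ht1 : t ≤ 1) :
    KL b ((1 - t) • n + t • b) ≤ (1 - t) * KL b n + t * (b a₀ * Real.log t) := by
  classical
  have hterm (a : A) : ((1 - t) * n a + t * b a) * Real.log (((1 - t) * n a + t * b a) / b a) ≤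
      (1 - t) * (n a * Real.log (n a / b a)) +
        if a = a₀ then t * (b a * Real.log t) else 0 := by
    have hba := (hb a).ne'
    split_ifs with ha
    · rw [ha, hna₀, ← ha, mul_zero, zero_add, mul_div_cancel_right₀ t hba]
      exact le_of_eq (by ring)
    have hconv := Real.convexOn_mul_log.2 (Set.mem_Ici.2 (div_nonneg (hn a) (hb a).le))
      (Set.mem_Ici.2 zero_le_one) (sub_nonneg.2 ht1) ht0.le (sub_add_cancel 1 t)
    simp only [smul_eq_mul, mul_one, Real.log_one, mul_zero, add_zero] at hconv
    calc ((1 - t) * n a + t * b a) * Real.log (((1 - t) * n a + t * b a) / b a)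
        = b a * (((1 - t) * (n a / b a) + t) * Real.log ((1 - t) * (n a / b a) + t)) := by
          rw [show ((1 - t) * n a + t * b a) / b a = (1 - t) * (n a / b a) + t by field_simp]
          field_simp
      _ ≤ b a * ((1 - t) * (n a / b a * Real.log (n a / b a))) := by
          gcongr
          exact (hb a).le
      _ = (1 - t) * (n a * Real.log (n a / b a)) + 0 := by field_simp; ring
  calc KL b ((1 - t) • n + t • b)
      ≤ ∑ a, ((1 - t) * (n a * Real.log (n a / b a)) +
          if a = a₀ then t * (b a * Real.log t) else 0) := sum_le_sum fun a _ => hterm a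
    _ = (1 - t) * KL b n + t * (b a₀ * Real.log t) := by
      rw [sum_add_distrib, ← mul_sum, sum_ite_eq' univ a₀, if_pos (mem_univ a₀), KL]

end KL

section Prox

variable {A : Type*} [Fintype A] {φ : (A → ℝ) → ℝ} {b n p : A → ℝ}

/- Moving from a boundary point towards `b` changes `φ` at most linearly in `t`, while the
divergence drops by a multiple of `t * log t`. -/
lemma pos_of_isMinOn_add_KL (hφ : ConvexOn ℝ (simplex A) φ) (hb : b ∈ simplex A)
    (hbpos : ∀ a, 0 < b a) (hn : n ∈ simplex A)
    (hmin : IsMinOn (fun p => φ p + KL b p) (simplex A) n) (a : A) : 0 < n a := by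
  refine (hn.1 a).lt_of_ne' fun hna => ?_
  have hlog_ge (t : ℝ) (ht0 : 0 < t) (ht1 : t ≤ 1) :
      φ n + KL b n - φ b ≤ b a * Real.log t := by
    have hmem := convex_simplex hn hb (sub_nonneg.2 ht1) ht0.le (sub_add_cancel 1 t)
    have hφt := hφ.2 hn hb (sub_nonneg.2 ht1) ht0.le (sub_add_cancel 1 t)
    have hKLt := KL_convexCombo_le_of_apply_eq_zero hbpos hn.1 hna ht0 ht1
    have hmint := isMinOn_iff.1 hmin _ hmem
    simp only [smul_eq_mul] at hφt
    exact le_of_mul_le_mul_left (by linarith) ht0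
  set r := (φ n + KL b n - φ b) / b a with hr
  have hexp_le_one : Real.exp (min 0 (r - 1)) ≤ 1 := Real.exp_le_one_iff.2 (min_le_left _ _)
  have hr_le := hlog_ge _ (Real.exp_pos _) hexp_le_one
  rw [Real.log_exp, ← div_le_iff₀' (hbpos a), ← hr] at hr_le
  linarith [min_le_right 0 (r - 1)]

/- Along the segment from `n` to `p` the divergence `KL b` is its linearization at `n` plus `KL n`,
which the chi-squared bound makes `O(t ^ 2)`. -/
lemma le_add_sum_log_of_isMinOn_add_KL (hφ : ConvexOn ℝ (simplex A) φ) (hb : ∀ a, 0 < b a)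
    (hn : n ∈ simplex A) (hnpos : ∀ a, 0 < n a)
    (hmin : IsMinOn (fun p => φ p + KL b p) (simplex A) n) (hp : p ∈ simplex A) :
    φ n ≤ φ p + ∑ a, (p a - n a) * Real.log (n a / b a) := by
  set C := ∑ a, (p a - n a) ^ 2 / n a
  set L := ∑ a, (p a - n a) * Real.log (n a / b a)
  have hle (t : ℝ) (ht0 : 0 < t) (ht1 : t ≤ 1) : φ n ≤ φ p + L + t * C := by
    have hmem := convex_simplex hn hp (sub_nonneg.2 ht1) ht0.le (sub_add_cancel 1 t)
    have hφt := hφ.2 hn hp (sub_nonneg.2 ht1) ht0.le (sub_add_cancel 1 t)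
    have hsub (a : A) : ((1 - t) • n + t • p) a - n a = t * (p a - n a) := by
      simp only [Pi.add_apply, Pi.smul_apply, smul_eq_mul]
      ring
    have hKLt := KL_eq_KL_add_KL_add_sum hb hnpos ((1 - t) • n + t • p)
    have hsq := KL_le_sum_sq_div hn hnpos hmem
    simp only [hsub, mul_assoc, mul_pow, mul_div_assoc, ← mul_sum] at hKLt hsq
    have hmint := isMinOn_iff.1 hmin _ hmem
    simp only [smul_eq_mul] at hφt
    exact le_of_mul_le_mul_left (by linarith) ht0
  have hlim : Filter.Tendsto (fun t => φ p + L + t * C) (nhdsWithin 0 (Set.Ioi 0))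
      (nhds (φ p + L)) := by
    have hcont : Continuous fun t : ℝ => φ p + L + t * C := by fun_prop
    simpa using (hcont.tendsto 0).mono_left nhdsWithin_le_nhds
  refine ge_of_tendsto hlim ?_
  filter_upwards [Ioc_mem_nhdsGT zero_lt_one] with t ht using hle t ht.1 ht.2

lemma add_KL_add_KL_le_of_isMinOn_add_KL (hφ : ConvexOn ℝ (simplex A) φ) (hb : ∀ a, 0 < b a)
    (hn : n ∈ simplex A) (hnpos : ∀ a, 0 < n a)
    (hmin : IsMinOn (fun p => φ p + KL b p) (simplex A) n) (hp : p ∈ simplex A) :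
    φ n + KL b n + KL n p ≤ φ p + KL b p := by
  have hfirst := le_add_sum_log_of_isMinOn_add_KL hφ hb hn hnpos hmin hp
  linarith [KL_eq_KL_add_KL_add_sum hb hnpos p]

variable {G : A → ℝ} {hreg : (A → ℝ) → ℝ} {η : ℝ}

lemma convexOn_mul_sum_add (hconv : ConvexOn ℝ (simplex A) hreg) (hη : 0 ≤ η) :
    ConvexOn ℝ (simplex A) fun p => η * ((∑ a, G a * p a) + hreg p) :=
  (((dotProductBilin ℝ ℝ G).convexOn convex_simplex).add hconv).smul hη

lemma IsProxStep.pos (hstep : IsProxStep G hreg η b n) (hconv : ConvexOn ℝ (simplex A) hreg)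
    (hη : 0 ≤ η) (hb : b ∈ simplex A) (hbpos : ∀ a, 0 < b a) (a : A) : 0 < n a :=
  pos_of_isMinOn_add_KL (convexOn_mul_sum_add hconv hη) hb hbpos hstep.1 hstep.2 a

lemma IsProxStep.add_KL_add_KL_le (hstep : IsProxStep G hreg η b n)
    (hconv : ConvexOn ℝ (simplex A) hreg) (hη : 0 ≤ η) (hb : b ∈ simplex A)
    (hbpos : ∀ a, 0 < b a) (hp : p ∈ simplex A) :
    η * ((∑ a, G a * n a) + hreg n) + KL b n + KL n p ≤
      η * ((∑ a, G a * p a) + hreg p) + KL b p :=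
  add_KL_add_KL_le_of_isMinOn_add_KL (convexOn_mul_sum_add hconv hη) hbpos hstep.1
    (hstep.pos hconv hη hb hbpos) hstep.2 hp

end Prox

open scoped Matrix

section Bellman

lemma Pmat_nonneg {S A : Type*} [Fintype A] {P : S → A → S → ℝ} {π : S → A → ℝ}
    (hP0 : ∀ s a s', 0 ≤ P s a s') (hπ : IsPolicy π) (s s' : S) : 0 ≤ Pmat P π s s' :=
  sum_nonneg fun a _ => mul_nonneg ((hπ s).1 a) (hP0 s a s')

variable {S A : Type*} [Fintype S] [Fintype A] {P : S → A → S → ℝ} {c : S → A → ℝ}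
  {h : S → (A → ℝ) → ℝ} {γ : ℝ} {π w : S → A → ℝ} {V W : S → ℝ}

lemma nonpos_of_le_smul_mulVec {K : Matrix S S ℝ} (hK0 : ∀ s s', 0 ≤ K s s')
    (hK1 : ∀ s, ∑ s', K s s' ≤ 1) (hγ0 : 0 ≤ γ) (hγ1 : γ < 1) {x : S → ℝ}
    (hx : x ≤ γ • K *ᵥ x) : x ≤ 0 := by
  intro s
  have : Nonempty S := ⟨s⟩
  obtain ⟨m, hm⟩ := Finite.exists_max x
  refine (hm s).trans (le_of_not_gt fun hpos : 0 < x m => ?_)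
  have hKx : (K *ᵥ x) m ≤ x m :=
    calc (K *ᵥ x) m ≤ ∑ s', K m s' * x m :=
          sum_le_sum fun s' _ => mul_le_mul_of_nonneg_left (hm s') (hK0 m s')
      _ ≤ x m := by rw [← sum_mul]; exact mul_le_of_le_one_left hpos.le (hK1 m)
  have hxm : x m ≤ γ * x m := (hx m).trans (mul_le_mul_of_nonneg_left hKx hγ0)
  exact hxm.not_gt (mul_lt_of_lt_one_left hpos hγ1)

lemma sum_Pmat (hP1 : ∀ s a, ∑ s', P s a s' = 1) (hπ : IsPolicy π) (s : S) :
    ∑ s', Pmat P π s s' = 1 := by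
  simp only [Pmat, Matrix.of_apply]
  rw [sum_comm]
  simp only [← mul_sum, hP1, mul_one, (hπ s).2]

/-- The Bellman operator of the policy `π`, whose fixed points are the `V` with
`IsValue P c h γ π V`. -/
def bellman (P : S → A → S → ℝ) (c : S → A → ℝ) (h : S → (A → ℝ) → ℝ) (γ : ℝ) (π : S → A → ℝ)
    (V : S → ℝ) : S → ℝ :=
  fun s => (∑ a, π s a * c s a) + h s (π s) + γ * (Pmat P π *ᵥ V) s

lemma IsValue.bellman_eq (hV : IsValue P c h γ π V) : bellman P c h γ π V = V :=
  (funext hV).symm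

lemma bellman_sub_bellman :
    bellman P c h γ π V - bellman P c h γ π W = γ • Pmat P π *ᵥ (V - W) := by
  ext s
  simp only [bellman, Matrix.mulVec_sub, Pi.sub_apply, Pi.smul_apply, smul_eq_mul]
  ring

lemma bellman_mono (hP0 : ∀ s a s', 0 ≤ P s a s') (hγ0 : 0 ≤ γ) (hπ : IsPolicy π) :
    Monotone (bellman P c h γ π) := fun V W hVW s => by
  have hmulVec : (Pmat P π *ᵥ V) s ≤ (Pmat P π *ᵥ W) s :=
    dotProduct_le_dotProduct_of_nonneg_left hVW (Pmat_nonneg hP0 hπ s)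
  unfold bellman
  gcongr

lemma IsValue.le_of_bellman_le (hV : IsValue P c h γ π V) (hP0 : ∀ s a s', 0 ≤ P s a s')
    (hP1 : ∀ s a, ∑ s', P s a s' = 1) (hγ0 : 0 ≤ γ) (hγ1 : γ < 1) (hπ : IsPolicy π)
    (hW : bellman P c h γ π W ≤ W) : V ≤ W := by
  refine sub_nonpos.1 (nonpos_of_le_smul_mulVec (Pmat_nonneg hP0 hπ)
    (fun s => (sum_Pmat hP1 hπ s).le) hγ0 hγ1 ?_)
  calc V - W ≤ bellman P c h γ π V - bellman P c h γ π W := by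
        rw [hV.bellman_eq]
        exact sub_le_sub_left hW V
    _ = γ • Pmat P π *ᵥ (V - W) := bellman_sub_bellman

lemma IsValue.dotProduct_bellman (hV : IsValue P c h γ π V) {ν : S → ℝ}
    (hν : ν ᵥ* Pmat P π = ν) (W : S → ℝ) :
    ν ⬝ᵥ bellman P c h γ π W = ν ⬝ᵥ V + γ * (ν ⬝ᵥ W - ν ⬝ᵥ V) := by
  have hsub : bellman P c h γ π W = V + γ • Pmat P π *ᵥ (W - V) := by
    rw [← bellman_sub_bellman (c := c) (h := h), hV.bellman_eq, add_sub_cancel]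
  rw [hsub, dotProduct_add, dotProduct_smul, Matrix.dotProduct_mulVec, hν, dotProduct_sub,
    smul_eq_mul]

lemma sum_Qfun_mul_add (hw : IsPolicy w) (s : S) :
    (∑ a, Qfun P c h γ π V s a * w s a) + h s (w s) = bellman P c h γ w V s + h s (π s) := by
  have hPmat : (Pmat P w *ᵥ V) s = ∑ a, w s a * ∑ s', P s a s' * V s' := by
    simp only [Matrix.mulVec, dotProduct, Pmat, Matrix.of_apply, sum_mul, mul_sum, mul_assoc]
    exact sum_comm
  have hQ : ∑ a, Qfun P c h γ π V s a * w s a =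
      (∑ a, w s a * c s a) + h s (π s) + γ * (Pmat P w *ᵥ V) s := by
    calc ∑ a, Qfun P c h γ π V s a * w s a
        = ∑ a, (w s a * c s a + w s a * h s (π s) + γ * (w s a * ∑ s', P s a s' * V s')) :=
          sum_congr rfl fun a _ => by unfold Qfun; ring
      _ = (∑ a, w s a * c s a) + h s (π s) + γ * (Pmat P w *ᵥ V) s := by
          rw [sum_add_distrib, sum_add_distrib, ← sum_mul, (hw s).2, one_mul, ← mul_sum, hPmat]
  rw [hQ, bellman]
  ring

end Bellman

section PolicyMirrorDescent

variable {S A : Type*} [Fintype S] [Fintype A] {P : S → A → S → ℝ} {c : S → A → ℝ}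
  {h : S → (A → ℝ) → ℝ} {γ η : ℝ} {π w ρ : S → A → ℝ} {V V' Vρ ν : S → ℝ}

/-- `w` is the policy reached from `π` by one step of policy mirror descent of stepsize `η`, where
`V` is the value function of `π`. -/
def IsPMDStep (P : S → A → S → ℝ) (c : S → A → ℝ) (h : S → (A → ℝ) → ℝ) (γ η : ℝ)
    (π : S → A → ℝ) (V : S → ℝ) (w : S → A → ℝ) : Prop :=
  ∀ s, IsProxStep (Qfun P c h γ π V s) (h s) η (π s) (w s)

namespace IsPMDStep

lemma isPolicy (hstep : IsPMDStep P c h γ η π V w) : IsPolicy w := fun s => (hstep s).1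

lemma bellman_le (hstep : IsPMDStep P c h γ η π V w) (hη : 0 < η) (hπ : IsPolicy π)
    (hπpos : ∀ s a, 0 < π s a) (hV : IsValue P c h γ π V) : bellman P c h γ w V ≤ V := fun s => by
  have hmin := (hstep s).2 (π s) (hπ s)
  rw [sum_Qfun_mul_add hstep.isPolicy, sum_Qfun_mul_add hπ, hV.bellman_eq,
    KL_self (hπpos s)] at hmin
  have hKL := KL_nonneg (hπ s) (hπpos s) (hstep s).1
  exact le_of_mul_le_mul_left (by linarith) hη

lemma value_le (hstep : IsPMDStep P c h γ η π V w) (hP0 : ∀ s a s', 0 ≤ P s a s')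
    (hP1 : ∀ s a, ∑ s', P s a s' = 1) (hγ0 : 0 ≤ γ) (hγ1 : γ < 1) (hη : 0 < η)
    (hπ : IsPolicy π) (hπpos : ∀ s a, 0 < π s a) (hV : IsValue P c h γ π V)
    (hV' : IsValue P c h γ w V') : V' ≤ V :=
  hV'.le_of_bellman_le hP0 hP1 hγ0 hγ1 hstep.isPolicy (hstep.bellman_le hη hπ hπpos hV)

lemma mul_sub_bellman_add_KL_le (hstep : IsPMDStep P c h γ η π V w)
    (hconv : ∀ s, ConvexOn ℝ (simplex A) (h s)) (hη : 0 ≤ η) (hπ : IsPolicy π)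
    (hπpos : ∀ s a, 0 < π s a) (hV' : V' ≤ bellman P c h γ w V) (hρ : IsPolicy ρ) (s : S) :
    η * (V' s - bellman P c h γ ρ V s) + KL (w s) (ρ s) ≤ KL (π s) (ρ s) := by
  have hthree_point := (hstep s).add_KL_add_KL_le (hconv s) hη (hπ s) (hπpos s) (hρ s)
  rw [sum_Qfun_mul_add hstep.isPolicy, sum_Qfun_mul_add hρ] at hthree_point
  have hKL := KL_nonneg (hπ s) (hπpos s) (hstep s).1
  linarith [mul_le_mul_of_nonneg_left (hV' s) hη]

lemma mul_gap_sub_add_KL_le (hstep : IsPMDStep P c h γ η π V w)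
    (hconv : ∀ s, ConvexOn ℝ (simplex A) (h s)) (hη : 0 ≤ η) (hπ : IsPolicy π)
    (hπpos : ∀ s a, 0 < π s a) (hV' : V' ≤ bellman P c h γ w V) (hρ : IsPolicy ρ)
    (hVρ : IsValue P c h γ ρ Vρ) (hν0 : 0 ≤ ν) (hν : ν ᵥ* Pmat P ρ = ν) :
    η * ((ν ⬝ᵥ V' - ν ⬝ᵥ Vρ) - γ * (ν ⬝ᵥ V - ν ⬝ᵥ Vρ)) + (ν ⬝ᵥ fun s => KL (w s) (ρ s)) ≤
      ν ⬝ᵥ fun s => KL (π s) (ρ s) := by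
  have hdescent : η • (V' - bellman P c h γ ρ V) + (fun s => KL (w s) (ρ s)) ≤
      fun s => KL (π s) (ρ s) :=
    hstep.mul_sub_bellman_add_KL_le hconv hη hπ hπpos hV' hρ
  have haverage := dotProduct_le_dotProduct_of_nonneg_left hdescent hν0
  rw [dotProduct_add, dotProduct_smul, dotProduct_sub, hVρ.dotProduct_bellman hν,
    smul_eq_mul] at haverage
  rwa [sub_sub]

end IsPMDStep

lemma le_div_of_forall_mul_sub_add_le {δ D : ℕ → ℝ} (hγ0 : 0 ≤ γ) (hγ1 : γ < 1) (hη : 0 < η)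
    (hδ : Antitone δ) (hδ0 : ∀ k, 0 ≤ δ k) (hD0 : ∀ k, 0 ≤ D k)
    (hrec : ∀ k, η * (δ (k + 1) - γ * δ k) + D (k + 1) ≤ D k) (k : ℕ) :
    δ (k + 1) ≤ (η * γ * δ 0 + D 0) / (η * (1 - γ) * (k + 1)) := by
  have : 0 < 1 - γ := sub_pos.2 hγ1
  have hpotential (k : ℕ) : η * (1 - γ) * k * δ k + η * γ * δ k + D k ≤ η * γ * δ 0 + D 0 := by
    induction k with
    | zero => simp
    | succ k ih =>
      have hdecr : η * (1 - γ) * k * δ (k + 1) ≤ η * (1 - γ) * k * δ k := by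
        gcongr
        exact hδ k.le_succ
      push_cast
      linarith [hrec k]
  have hδ_nonneg : 0 ≤ η * γ * δ (k + 1) := mul_nonneg (by positivity) (hδ0 _)
  have hbound := hpotential (k + 1)
  push_cast at hbound
  rw [le_div_iff₀ (by positivity)]
  linarith [hD0 (k + 1)]

lemma forall_isPolicy_and_pos_of_isPMDStep {π : ℕ → S → A → ℝ} {V : (S → A → ℝ) → S → ℝ}
    (hconv : ∀ s, ConvexOn ℝ (simplex A) (h s)) (hη : 0 ≤ η) (hπ0 : IsPolicy (π 0))
    (hπ0pos : ∀ s a, 0 < π 0 s a)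
    (hstep : ∀ k, IsPMDStep P c h γ η (π k) (V (π k)) (π (k + 1))) (k : ℕ) :
    IsPolicy (π k) ∧ ∀ s a, 0 < π k s a := by
  induction k with
  | zero => exact ⟨hπ0, hπ0pos⟩
  | succ k ih =>
    exact ⟨(hstep k).isPolicy, fun s => (hstep k s).pos (hconv s) hη (ih.1 s) (ih.2 s)⟩

end PolicyMirrorDescent

theorem pmd_sublinear_convergence_general {S A : Type*} [Fintype S] [Fintype A]
    (P : S → A → S → ℝ) (hP0 : ∀ s a s', 0 ≤ P s a s')
    (hP1 : ∀ s a, ∑ s', P s a s' = 1)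
    (c : S → A → ℝ) (γ : ℝ) (hγ0 : 0 ≤ γ) (hγ1 : γ < 1)
    (h : S → (A → ℝ) → ℝ) (hconv : ∀ s, ConvexOn ℝ (simplex A) (h s))
    (V : (S → A → ℝ) → S → ℝ)
    (hV : ∀ w : S → A → ℝ, IsPolicy w → IsValue P c h γ w (V w))
    (πstar : S → A → ℝ) (hπstar : IsPolicy πstar)
    (hopt : ∀ w : S → A → ℝ, IsPolicy w → ∀ s, V πstar s ≤ V w s)
    (ν : S → ℝ) (hν0 : ∀ s, 0 ≤ ν s)
    (hstat : ∀ s', ∑ s, ν s * (∑ a, πstar s a * P s a s') = ν s')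
    (η : ℝ) (hη : 0 < η)
    (π : ℕ → S → A → ℝ) (hπ0 : IsPolicy (π 0)) (hπ0pos : ∀ s a, 0 < π 0 s a)
    (hstep : ∀ k s, IsProxStep (Qfun P c h γ (π k) (V (π k)) s) (h s) η
      (π k s) (π (k + 1) s)) (k : ℕ) :
    (∑ s, ν s * V (π (k + 1)) s) - (∑ s, ν s * V πstar s)
      ≤ (η * γ * ((∑ s, ν s * V (π 0) s) - (∑ s, ν s * V πstar s))
          + ∑ s, ν s * KL (π 0 s) (πstar s)) / (η * (1 - γ) * (k + 1)) := by
  have hpmd (k : ℕ) : IsPMDStep P c h γ η (π k) (V (π k)) (π (k + 1)) := hstep k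
  choose hpol hpos using
    forall_isPolicy_and_pos_of_isPMDStep (V := V) hconv hη.le hπ0 hπ0pos hpmd
  have hVdecr (k : ℕ) : V (π (k + 1)) ≤ V (π k) :=
    (hpmd k).value_le hP0 hP1 hγ0 hγ1 hη (hpol k) (hpos k) (hV _ (hpol k)) (hV _ (hpol (k + 1)))
  have hVbellman (k : ℕ) : V (π (k + 1)) ≤ bellman P c h γ (π (k + 1)) (V (π k)) :=
    (hV _ (hpol (k + 1))).bellman_eq.ge.trans (bellman_mono hP0 hγ0 (hpol (k + 1)) (hVdecr k))
  refine le_div_of_forall_mul_sub_add_le (δ := fun k => ν ⬝ᵥ V (π k) - ν ⬝ᵥ V πstar)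
    (D := fun k => ν ⬝ᵥ fun s => KL (π k s) (πstar s)) hγ0 hγ1 hη ?_ ?_ ?_ ?_ k
  · exact antitone_nat_of_succ_le fun k =>
      sub_le_sub_right (dotProduct_le_dotProduct_of_nonneg_left (hVdecr k) hν0) _
  · exact fun k => sub_nonneg.2 <|
      dotProduct_le_dotProduct_of_nonneg_left (hopt _ (hpol k)) hν0
  · exact fun k => dotProduct_nonneg_of_nonneg hν0 fun s =>
      KL_nonneg (hpol k s) (hpos k s) (hπstar s)
  · exact fun k => (hpmd k).mul_gap_sub_add_KL_le hconv hη.le (hpol k) (hpos k) (hVbellman k)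
      hπstar (hV _ hπstar) hν0 (funext hstat)

/-- sublinear convergence of PMD for general convex regularizers:
if `h` is convex (modulus 0) relative to KL, `π_0` is the uniform policy, and
the PMD iterates use a constant stepsize `η > 0`, then for every `k`:
`f(π_{k+1}) - f(π*) ≤ (ηγ[f(π_0) - f(π*)] + log|A|) / (η(1-γ)(k+1))`. -/
theorem pmd_sublinear_convergence {S A : Type*} [Fintype S] [Fintype A]
    [Nonempty S] [Nonempty A]
    (P : S → A → S → ℝ) (hP0 : ∀ s a s', 0 ≤ P s a s')
    (hP1 : ∀ s a, ∑ s', P s a s' = 1)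
    (c : S → A → ℝ) (γ : ℝ) (hγ0 : 0 < γ) (hγ1 : γ < 1)
    (h : S → (A → ℝ) → ℝ) (h' : S → (A → ℝ) → A → ℝ)
    (hconv : ConvexReg h h' 0)
    (V : (S → A → ℝ) → S → ℝ)
    (hV : ∀ w : S → A → ℝ, IsPolicy w → IsValue P c h γ w (V w))
    (πstar : S → A → ℝ) (hπstar : IsPolicy πstar)
    (hopt : ∀ w : S → A → ℝ, IsPolicy w → ∀ s, V πstar s ≤ V w s)
    (ν : S → ℝ) (hν0 : ∀ s, 0 ≤ ν s) (hν1 : ∑ s, ν s = 1)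
    (hstat : ∀ s', ∑ s, ν s * (∑ a, πstar s a * P s a s') = ν s')
    (η : ℝ) (hη : 0 < η)
    (π : ℕ → S → A → ℝ)
    (hunif : ∀ s a, π 0 s a = 1 / (Fintype.card A : ℝ))
    (hpol : ∀ k, IsPolicy (π k)) (hpos : ∀ k s a, 0 < π k s a)
    (hstep : ∀ k s, IsProxStep (Qfun P c h γ (π k) (V (π k)) s) (h s) η
      (π k s) (π (k+1) s)) :
    ∀ k : ℕ,
      (∑ s, ν s * V (π (k+1)) s) - (∑ s, ν s * V πstar s)
        ≤ (η * γ * ((∑ s, ν s * V (π 0) s) - (∑ s, ν s * V πstar s))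
            + Real.log (Fintype.card A)) / (η * (1 - γ) * (k + 1)) := by
  intro k
  have hKL : ∑ s, ν s * KL (π 0 s) (πstar s) ≤ Real.log (Fintype.card A) :=
    sum_mul_le_of_mem_simplex ⟨hν0, hν1⟩ fun s => KL_uniform_le_log_card (hπstar s) (hunif s)
  have : 0 < 1 - γ := sub_pos.2 hγ1
  exact (pmd_sublinear_convergence_general P hP0 hP1 c γ hγ0.le hγ1 h hconv.convexOn V hV πstar
    hπstar hopt ν hν0 hstat η hη π (hpol 0) (hpos 0) hstep k).trans (by gcongr)

end RL
end
end

section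
/- Let γ ∈ (0,1), l = ⌈log_γ(1/4)⌉, and let (X_k), (Y_k), (Z_k) be nonnegative real sequences satisfying X_{k+1} ≤ γ X_k + (Y_k − Y_{k+1}) + Z_k for all k ≥ 0. If Y_k = Y·2^{−(⌊k/l⌋+1)} and Z_k = Z·2^{−(⌊k/l⌋+2)} for some Y ≥ 0 and Z ≥ 0, then for all k ≥ 0: X_k ≤ 2^{−⌊k/l⌋} ( X_0 + Y + 5Z/(4(1−γ)) ). -/
/-!
Write `Y k = y * q ^ (k / l + 1)` and `Z k = z * q ^ (k / l + 2)`, with `q = 1 / 2` in the theorem.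
On a block of indices with the same quotient `m = k / l` the terms in `Y` cancel and the recursion
is the affine contraction `x ↦ γ * x + (1 - γ) * c * q ^ m` with `c = q ^ 2 * z / (1 - γ)`, which
pulls `X k / q ^ m` geometrically towards `c`. Only at the end of a block does `Y` drop; by then the
contraction has gained the factor `γ ^ l ≤ q ^ 2`, which pays both for that drop and for passing
from `q ^ m` to `q ^ (m + 1)`. Solving the contraction on each block, restarted at `q ^ m * A`, thus
gives an explicit supersolution of the recursion, and `X` stays below it.
-/

theorem pow_le_of_ceil_logb_le {b x : ℝ} (hb0 : 0 < b) (hb1 : b < 1) (hx : 0 < x) {n : ℕ}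
    (hn : ⌈Real.logb b x⌉ ≤ n) : b ^ n ≤ x := by
  have hlog : Real.logb b x ≤ (n : ℝ) := by exact_mod_cast Int.ceil_le.mp hn
  simpa only [Real.rpow_natCast] using
    (Real.logb_le_iff_le_rpow_of_base_lt_one hb0 hb1 hx).mp hlog

theorem le_of_supersolution {γ : ℝ} (hγ : 0 ≤ γ) {X B f : ℕ → ℝ} (hzero : X 0 ≤ B 0)
    (hX : ∀ k, X (k + 1) ≤ γ * X k + f k) (hB : ∀ k, γ * B k + f k ≤ B (k + 1)) (k : ℕ) :
    X k ≤ B k := by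
  induction k with
  | zero => exact hzero
  | succ k ih =>
    calc X (k + 1) ≤ γ * X k + f k := hX k
      _ ≤ γ * B k + f k := by gcongr
      _ ≤ B (k + 1) := hB k

theorem mod_add_one_eq_of_dvd_add_one {l k : ℕ} (hk : l ∣ k + 1) : k % l + 1 = l := by
  have hl : 0 < l := Nat.pos_of_dvd_of_pos hk k.succ_pos
  have hdvd : l ∣ k % l + 1 := by
    rwa [Nat.dvd_iff_mod_eq_zero, Nat.mod_add_mod, ← Nat.dvd_iff_mod_eq_zero]
  exact le_antisymm (Nat.mod_lt k hl) (Nat.le_of_dvd (Nat.succ_pos _) hdvd)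

theorem add_one_mod_of_not_dvd {l k : ℕ} (hk : ¬ l ∣ k + 1) : (k + 1) % l = k % l + 1 := by
  have hsucc := Nat.div_add_mod (k + 1) l
  have hself := Nat.div_add_mod k l
  rw [Nat.succ_div_of_not_dvd hk] at hsucc
  omega

/-- The supersolution to which `X` is compared: on the block of indices `k` with `k / l = m` it
starts at `q ^ m * A` and solves `B (k + 1) = γ * B k + (1 - γ) * c * q ^ m`. -/
def blockBarrier (γ q c A : ℝ) (l k : ℕ) : ℝ :=
  q ^ (k / l) * (c + γ ^ (k % l) * (A - c))

section BlockBarrier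

variable {γ q c A : ℝ} {l : ℕ}

theorem blockBarrier_zero : blockBarrier γ q c A l 0 = A := by
  simp [blockBarrier]

theorem blockBarrier_le (hγ0 : 0 ≤ γ) (hγ1 : γ ≤ 1) (hq : 0 ≤ q) (hcA : c ≤ A) (k : ℕ) :
    blockBarrier γ q c A l k ≤ q ^ (k / l) * A := by
  have hpow : γ ^ (k % l) * (A - c) ≤ A - c :=
    mul_le_of_le_one_left (sub_nonneg.mpr hcA) (pow_le_one₀ hγ0 hγ1)
  unfold blockBarrier
  gcongr
  linarith

theorem blockBarrier_affine_step (k : ℕ) :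
    γ * blockBarrier γ q c A l k + (1 - γ) * c * q ^ (k / l) =
      q ^ (k / l) * (c + γ ^ (k % l + 1) * (A - c)) := by
  unfold blockBarrier
  ring

theorem blockBarrier_succ_of_not_dvd {k : ℕ} (hk : ¬ l ∣ k + 1) :
    blockBarrier γ q c A l (k + 1) = q ^ (k / l) * (c + γ ^ (k % l + 1) * (A - c)) := by
  rw [blockBarrier, Nat.succ_div_of_not_dvd hk, add_one_mod_of_not_dvd hk]

theorem blockBarrier_succ_of_dvd {k : ℕ} (hk : l ∣ k + 1) :
    blockBarrier γ q c A l (k + 1) = q ^ (k / l + 1) * A := by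
  rw [blockBarrier, Nat.succ_div_of_dvd hk, Nat.mod_eq_zero_of_dvd hk]
  ring

theorem blockBarrier_supersolution {y : ℝ} (hq : 0 ≤ q)
    (hblock : c + γ ^ l * (A - c) + y * (q - q ^ 2) ≤ q * A) (k : ℕ) :
    γ * blockBarrier γ q c A l k +
        (y * (q ^ (k / l + 1) - q ^ ((k + 1) / l + 1)) + (1 - γ) * c * q ^ (k / l)) ≤
      blockBarrier γ q c A l (k + 1) := by
  rw [add_left_comm, blockBarrier_affine_step]
  by_cases hk : l ∣ k + 1
  · rw [blockBarrier_succ_of_dvd hk, Nat.succ_div_of_dvd hk, mod_add_one_eq_of_dvd_add_one hk]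
    calc y * (q ^ (k / l + 1) - q ^ (k / l + 1 + 1)) + q ^ (k / l) * (c + γ ^ l * (A - c))
        = q ^ (k / l) * (c + γ ^ l * (A - c) + y * (q - q ^ 2)) := by ring
      _ ≤ q ^ (k / l) * (q * A) := by gcongr
      _ = q ^ (k / l + 1) * A := by ring
  · rw [blockBarrier_succ_of_not_dvd hk, Nat.succ_div_of_not_dvd hk, sub_self, mul_zero, zero_add]

end BlockBarrier

-- The constant `q * (1 + q)` comes from the extreme case `g = q ^ 2`: with it the coefficients of
-- `y` and `w` on the two sides agree, and only the slack `q * (1 - q) * x` is left.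
theorem block_contraction {g q x y w : ℝ} (hq0 : 0 ≤ q) (hq1 : q ≤ 1) (hg : g ≤ q ^ 2)
    (hx : 0 ≤ x) (hy : 0 ≤ y) (hw : 0 ≤ w) :
    q ^ 2 * w + g * (x + y + q * (1 + q) * w - q ^ 2 * w) + y * (q - q ^ 2) ≤
      q * (x + y + q * (1 + q) * w) := by
  have hgap : 0 ≤ x + y + q * (1 + q) * w - q ^ 2 * w := by
    have : 0 ≤ x + y + q * w := by positivity
    linarith
  have hslack : 0 ≤ q * (1 - q) * x :=
    mul_nonneg (mul_nonneg hq0 (sub_nonneg.mpr hq1)) hx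
  linarith [mul_le_mul_of_nonneg_right hg hgap]

theorem decaying_recursion_general {γ q : ℝ} (hγ0 : 0 ≤ γ) (hγ1 : γ < 1) (hq0 : 0 ≤ q)
    (hq1 : q ≤ 1) {l : ℕ} (hl : γ ^ l ≤ q ^ 2) {X : ℕ → ℝ} {y z : ℝ} (hX : 0 ≤ X 0) (hy : 0 ≤ y)
    (hz : 0 ≤ z)
    (hrec : ∀ k, X (k + 1) ≤
      γ * X k + y * (q ^ (k / l + 1) - q ^ ((k + 1) / l + 1)) + z * q ^ (k / l + 2)) (k : ℕ) :
    X k ≤ q ^ (k / l) * (X 0 + y + q * (1 + q) * (z / (1 - γ))) := by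
  have hγ : 0 < 1 - γ := sub_pos.mpr hγ1
  obtain ⟨w, rfl⟩ : ∃ w, z = (1 - γ) * w := ⟨z / (1 - γ), (mul_div_cancel₀ z hγ.ne').symm⟩
  have hw : 0 ≤ w := nonneg_of_mul_nonneg_right hz hγ
  rw [mul_div_cancel_left₀ w hγ.ne']
  set A := X 0 + y + q * (1 + q) * w
  have hqw : 0 ≤ q * w := mul_nonneg hq0 hw
  have hXB : X k ≤ blockBarrier γ q (q ^ 2 * w) A l k := by
    refine le_of_supersolution hγ0 ?_ (fun j ↦ (hrec j).trans_eq ?_)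
      (blockBarrier_supersolution hq0 (block_contraction hq0 hq1 hl hX hy hw)) k
    · rw [blockBarrier_zero, add_assoc, le_add_iff_nonneg_right]
      positivity
    · ring
  exact hXB.trans (blockBarrier_le hγ0 hγ1.le hq0 (by linarith) k)

/-- let `γ ∈ (0,1)`, `l = ⌈log_γ(1/4)⌉`, and let `(X_k)`,
`(Y_k)`, `(Z_k)` be nonnegative sequences with
`X_{k+1} ≤ γ X_k + (Y_k - Y_{k+1}) + Z_k`. If `Y_k = Y·2^{-(⌊k/l⌋+1)}` and
`Z_k = Z·2^{-(⌊k/l⌋+2)}`, then `X_k ≤ 2^{-⌊k/l⌋} (X_0 + Y + 5Z/(4(1-γ)))`. -/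
theorem decaying_recursion (γ : ℝ) (hγ0 : 0 < γ) (hγ1 : γ < 1)
    (l : ℕ) (hl : (l : ℤ) = Int.ceil (Real.logb γ (1/4)))
    (X Y Z : ℕ → ℝ)
    (hXnn : ∀ k, 0 ≤ X k) (hYnn : ∀ k, 0 ≤ Y k) (hZnn : ∀ k, 0 ≤ Z k)
    (hrec : ∀ k, X (k+1) ≤ γ * X k + (Y k - Y (k+1)) + Z k)
    (Ybar Zbar : ℝ) (hYbar : 0 ≤ Ybar) (hZbar : 0 ≤ Zbar)
    (hY : ∀ k, Y k = Ybar * (1/2 : ℝ) ^ (k / l + 1))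
    (hZ : ∀ k, Z k = Zbar * (1/2 : ℝ) ^ (k / l + 2)) :
    ∀ k, X k ≤ (1/2 : ℝ) ^ (k / l) *
      (X 0 + Ybar + 5 * Zbar / (4 * (1 - γ))) := by
  intro k
  have hpow : γ ^ l ≤ (1 / 2) ^ 2 :=
    pow_le_of_ceil_logb_le hγ0 hγ1 (by norm_num) (by norm_num [hl])
  have hbound := decaying_recursion_general hγ0.le hγ1 (by norm_num) (by norm_num) hpow (hXnn 0)
    hYbar hZbar (fun j ↦ by simpa only [hY, hZ, mul_sub] using hrec j) k
  have hconst : 1 / 2 * (1 + 1 / 2) * (Zbar / (1 - γ)) ≤ 5 * Zbar / (4 * (1 - γ)) := by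
    rw [mul_div_mul_comm]
    exact mul_le_mul_of_nonneg_right (by norm_num) (div_nonneg hZbar (sub_pos.mpr hγ1).le)
  exact hbound.trans (mul_le_mul_of_nonneg_left (add_le_add le_rfl hconst) (by positivity))
end
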